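/- arXiv:1601.05029 — 2 statements merged into one kernel-verified Lean document; each statement's English description precedes it below -/
import Mathlib

section
/- Let α and β be positive integers, let δ be a positive integer, let ℓ and k be integers with 0 ≤ ℓ < δ and 0 ≤ k < δ, and set η = exp(−2πiℓ/(βδ)) and ν = exp(−2πik/(βδ)). If there exist nonzero complex numbers z and w with z^β = w^β and η⁻¹ z^{−α} = ν⁻¹ w^{−α}, then ℓ = k (and consequently η = ν). -/
open Complex

/-!
Since `z / w` is a `β`-th root of unity, so is its power `(z / w) ^ α`, and raising
`η⁻¹ z ^ (-α) = ν⁻¹ w ^ (-α)` to the power `β` removes `z` and `w`. What remains,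
`exp (2πiℓ / δ) = exp (2πik / δ)`, says that `ℓ` and `k` agree modulo `δ`.
-/

lemma zpow_eq_zpow_of_mul_zpow_eq_mul_zpow {G₀ : Type*} [CommGroupWithZero G₀]
    {a b z w : G₀} {m n : ℤ} (hw : w ≠ 0) (hzw : z ^ m = w ^ m)
    (h : a * z ^ n = b * w ^ n) : a ^ m = b ^ m := by
  refine mul_right_cancel₀ (zpow_ne_zero n (zpow_ne_zero m hw)) ?_
  calc
    a ^ m * (w ^ m) ^ n = (a * z ^ n) ^ m := by rw [← hzw, zpow_comm z, mul_zpow]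
    _ = (b * w ^ n) ^ m := by rw [h]
    _ = b ^ m * (w ^ m) ^ n := by rw [mul_zpow, zpow_comm w]

lemma exp_two_pi_mul_I_mul_div_eq_iff_modEq {N : ℕ} (hN : N ≠ 0) {a b : ℤ} :
    exp (2 * Real.pi * I * a / N) = exp (2 * Real.pi * I * b / N) ↔ a ≡ b [ZMOD N] := by
  have : NeZero N := ⟨hN⟩
  rw [← ZMod.stdAddChar_coe, ← ZMod.stdAddChar_coe, ZMod.injective_stdAddChar.eq_iff,
    ZMod.intCast_eq_intCast_iff]

lemma inv_exp_neg_div_natCast_mul_pow {m : ℕ} (hm : m ≠ 0) (x y : ℂ) :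
    (exp (-x / (m * y)))⁻¹ ^ m = exp (x / y) := by
  rw [← exp_neg, ← exp_nat_mul, neg_div, neg_neg,
    ← mul_div_assoc, mul_div_mul_left x y (Nat.cast_ne_zero.mpr hm)]

theorem disjointness_of_phases_general {β δ : ℕ} (hβ : β ≠ 0) (hδ : δ ≠ 0) {n ℓ k : ℤ} {η ν : ℂ}
    (hη : η = exp (-(2 * Real.pi * I * ℓ) / (β * δ)))
    (hν : ν = exp (-(2 * Real.pi * I * k) / (β * δ)))
    {z w : ℂ} (hw : w ≠ 0) (hzw : z ^ β = w ^ β) (h : η⁻¹ * z ^ n = ν⁻¹ * w ^ n) :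
    ℓ ≡ k [ZMOD δ] := by
  have hpow : η⁻¹ ^ β = ν⁻¹ ^ β :=
    mod_cast zpow_eq_zpow_of_mul_zpow_eq_mul_zpow (m := β) hw (mod_cast hzw) h
  rwa [hη, hν, inv_exp_neg_div_natCast_mul_pow hβ, inv_exp_neg_div_natCast_mul_pow hβ,
    exp_two_pi_mul_I_mul_div_eq_iff_modEq hδ] at hpow

/-- Disjointness of the sets `Z_ℓ`: two phases `η = exp(−2πiℓ/(βδ))`
and `ν = exp(−2πik/(βδ))` with `0 ≤ ℓ, k < δ` producing the same pair
`(z^β, η⁻¹ z^{−α}) = (w^β, ν⁻¹ w^{−α})` must have `ℓ = k`. -/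
theorem disjointness_of_phases
    (α β δ : ℕ) (hα : 0 < α) (hβ : 0 < β) (hδ : 0 < δ)
    (ℓ k : ℤ) (hℓ0 : 0 ≤ ℓ) (hℓδ : ℓ < (δ : ℤ)) (hk0 : 0 ≤ k) (hkδ : k < (δ : ℤ))
    (η ν : ℂ)
    (hη : η = Complex.exp (-(2 * Real.pi * Complex.I * ℓ) / (β * δ)))
    (hν : ν = Complex.exp (-(2 * Real.pi * Complex.I * k) / (β * δ)))
    (h : ∃ z w : ℂ, z ≠ 0 ∧ w ≠ 0 ∧ z ^ β = w ^ β ∧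
          η⁻¹ * z ^ (-(α : ℤ)) = ν⁻¹ * w ^ (-(α : ℤ))) :
    ℓ = k ∧ η = ν := by
  obtain ⟨z, w, -, hw, hzw, hphase⟩ := h
  have hmod : ℓ ≡ k [ZMOD δ] :=
    disjointness_of_phases_general hβ.ne' hδ.ne' hη hν hw hzw hphase
  obtain rfl : ℓ = k := by
    rwa [Int.ModEq, Int.emod_eq_of_lt hℓ0 hℓδ, Int.emod_eq_of_lt hk0 hkδ] at hmod
  exact ⟨rfl, hη.trans hν.symm⟩
end

section
/- Let k be a real number with sin k ≠ 0, set ζ = e^{ik}, and let z₁ and z₂ be nonzero complex numbers. Let M be the 4×4 complex matrix with rows (1, 1, −1, −1), (z₁ − ζ, z₁ − ζ⁻¹, 0, 0), (0, 0, z₂⁻¹ − ζ, z₂⁻¹ − ζ⁻¹), and (1 − ζ z₁⁻¹, 0, 1 − ζ z₂, 0). Then det M = 0 if and only if z₁ + z₁⁻¹ + z₂ + z₂⁻¹ = 4cos k. -/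
open Complex Matrix

/- Expanding along the flux row leaves two `3 × 3` minors, one with factor `d - c` and one with
factor `b - a`, where `a`, `b` and `c`, `d` are the nonzero entries of the two middle rows. Both
differences equal `ζ - ζ⁻¹ = 2 i sin k`, the same for the two edges, so this nonzero factor splits
off the determinant and what remains is the dispersion relation. -/

/-- The matrix of vertex conditions of the square-lattice quantum graph, acting on the coefficients
`(a₁, b₁, a₂, b₂)` of the edge waves `aⱼ e^{ikx} + bⱼ e^{-ikx}`: continuity in the first three
rows, Kirchhoff flux in the last. The parameter `ζ` plays the role of `e^{ik}`. -/
def vertexMatrix {K : Type*} [Field K] (ζ z₁ z₂ : K) : Matrix (Fin 4) (Fin 4) K :=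
  !![1, 1, -1, -1;
     z₁ - ζ, z₁ - ζ⁻¹, 0, 0;
     0, 0, z₂⁻¹ - ζ, z₂⁻¹ - ζ⁻¹;
     1 - ζ * z₁⁻¹, 0, 1 - ζ * z₂, 0]

theorem det_continuity_flux {R : Type*} [CommRing R] (a b c d e f : R) :
    det !![1, 1, -1, -1;
           a, b, 0, 0;
           0, 0, c, d;
           e, 0, f, 0] = -((d - c) * (e * b) + (b - a) * (f * d)) := by
  have minor_e : det !![1, -1, -1; b, 0, 0; 0, c, d] = b * (d - c) := by
    simp [det_fin_three, mul_add, sub_eq_add_neg]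
  have minor_f : det !![1, 1, -1; a, b, 0; 0, 0, d] = (b - a) * d := by
    simp [det_fin_three, sub_mul]
  calc
    _ = -(e * det !![1, -1, -1; b, 0, 0; 0, c, d]) - f * det !![1, 1, -1; a, b, 0; 0, 0, d] := by
      rw [det_succ_row _ 3, Fin.sum_univ_four]
      simp [det_fin_three, Fin.succAbove, sub_eq_add_neg, pow_succ]
    _ = -((d - c) * (e * b) + (b - a) * (f * d)) := by
      rw [minor_e, minor_f]
      ring

section Field

variable {K : Type*} [Field K] {ζ z₁ z₂ : K}

theorem one_sub_mul_inv_mul_sub_inv {z : K} (hζ : ζ ≠ 0) (hz : z ≠ 0) :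
    (1 - ζ * z⁻¹) * (z - ζ⁻¹) = z + z⁻¹ - (ζ + ζ⁻¹) := by
  field_simp
  ring

theorem det_vertexMatrix (hζ : ζ ≠ 0) (hz₁ : z₁ ≠ 0) (hz₂ : z₂ ≠ 0) :
    (vertexMatrix ζ z₁ z₂).det =
      -((ζ - ζ⁻¹) * (z₁ + z₁⁻¹ + z₂ + z₂⁻¹ - 2 * (ζ + ζ⁻¹))) := by
  have horizontal := one_sub_mul_inv_mul_sub_inv hζ hz₁
  have vertical := one_sub_mul_inv_mul_sub_inv hζ (inv_ne_zero hz₂)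
  rw [inv_inv] at vertical
  rw [vertexMatrix, det_continuity_flux, horizontal, vertical]
  ring

theorem det_vertexMatrix_eq_zero_iff (hζ : ζ ≠ ζ⁻¹) (hz₁ : z₁ ≠ 0) (hz₂ : z₂ ≠ 0) :
    (vertexMatrix ζ z₁ z₂).det = 0 ↔ z₁ + z₁⁻¹ + z₂ + z₂⁻¹ = 2 * (ζ + ζ⁻¹) := by
  have hζ₀ : ζ ≠ 0 := by
    rintro rfl
    simp at hζ
  rw [det_vertexMatrix hζ₀ hz₁ hz₂, neg_eq_zero, mul_eq_zero, or_iff_right (sub_ne_zero.mpr hζ),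
    sub_eq_zero]

end Field

theorem exp_I_mul_add_inv (k : ℂ) : exp (I * k) + (exp (I * k))⁻¹ = 2 * cos k := by
  rw [two_cos, ← exp_neg, mul_comm I, neg_mul]

theorem exp_I_mul_sub_inv (k : ℂ) : exp (I * k) - (exp (I * k))⁻¹ = 2 * I * sin k := by
  rw [mul_right_comm, two_sin, ← exp_neg, mul_comm I, neg_mul, mul_assoc, I_mul_I]
  ring

theorem exp_I_mul_ne_inv {k : ℂ} (hk : sin k ≠ 0) : exp (I * k) ≠ (exp (I * k))⁻¹ := by
  rw [← sub_ne_zero, exp_I_mul_sub_inv]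
  exact mul_ne_zero (mul_ne_zero two_ne_zero I_ne_zero) hk

theorem det_zero_iff_dispersion_general {k z₁ z₂ : ℂ} (hk : sin k ≠ 0) (hz₁ : z₁ ≠ 0)
    (hz₂ : z₂ ≠ 0) :
    (vertexMatrix (exp (I * k)) z₁ z₂).det = 0 ↔ z₁ + z₁⁻¹ + z₂ + z₂⁻¹ = 4 * cos k := by
  rw [det_vertexMatrix_eq_zero_iff (exp_I_mul_ne_inv hk) hz₁ hz₂,
    exp_I_mul_add_inv, ← mul_assoc]
  norm_num

/-- when `sin k ≠ 0`, the determinant of the matrix of vertex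
conditions vanishes if and only if the dispersion relation holds. -/
theorem det_zero_iff_dispersion
    (k : ℝ) (hk : Real.sin k ≠ 0) (ζ : ℂ) (hζ : ζ = Complex.exp (Complex.I * k))
    (z₁ z₂ : ℂ) (hz₁ : z₁ ≠ 0) (hz₂ : z₂ ≠ 0)
    (M : Matrix (Fin 4) (Fin 4) ℂ)
    (hM : M = !![1, 1, -1, -1;
                 z₁ - ζ, z₁ - ζ⁻¹, 0, 0;
                 0, 0, z₂⁻¹ - ζ, z₂⁻¹ - ζ⁻¹;
                 1 - ζ * z₁⁻¹, 0, 1 - ζ * z₂, 0]) :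
    M.det = 0 ↔ z₁ + z₁⁻¹ + z₂ + z₂⁻¹ = 4 * Real.cos k := by
  rw [hM, hζ, ofReal_cos]
  exact det_zero_iff_dispersion_general (by exact_mod_cast hk) hz₁ hz₂
end
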